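/- Let d ≥ 1, λ ≥ 1, m ≥ 1, T ≥ 1, τ ∈ (0,1], and θ ∈ ℝ^d. For each t = 1,…,T let 𝒜_t ⊂ ℝ^d be a finite nonempty set with ‖a‖₂ ≤ 1 for all a ∈ 𝒜_t, let A_t ∈ 𝒜_t, let θ̂_t ∈ ℝ^d, and let f_1 ≤ f_2 ≤ … ≤ f_T be positive reals. Set α_t = 2 f_t + Σ_{s=max(1,t−m)}^{t−1} ‖A_s‖_{V_t(λ)^{-1}}. Suppose that for every t: (i) ‖θ̂_t − τ·θ‖_{V_t(λ)} ≤ α_t, and (ii) ⟨A_t, θ̂_t⟩ + α_t‖A_t‖_{V_t(λ)^{-1}} ≥ ⟨a, θ̂_t⟩ + α_t‖a‖_{V_t(λ)^{-1}} for all a ∈ 𝒜_t. Then Σ_{t=1}^T (max_{a∈𝒜_t}⟨θ,a⟩ − ⟨θ,A_t⟩) ≤ (4 f_T/τ)·√(2 d T log((dλ+T)/(dλ))) + (4 m d/τ)·log((dλ+T)/(dλ)). -/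

import Mathlib

open Finset Matrix

/-- `mnorm M x = √(xᵀ M x)`, the norm associated to a positive definite matrix `M`. -/
noncomputable def mnorm {d : ℕ} (M : Matrix (Fin d) (Fin d) ℝ) (x : Fin d → ℝ) : ℝ :=
  Real.sqrt (x ⬝ᵥ M.mulVec x)

/-- `Vmat A lam t = lam • I + ∑_{s=1}^{t-1} A_s A_sᵀ`. -/
noncomputable def Vmat {d : ℕ} (A : ℕ → Fin d → ℝ) (lam : ℝ) (t : ℕ) :
    Matrix (Fin d) (Fin d) ℝ :=
  lam • (1 : Matrix (Fin d) (Fin d) ℝ) + ∑ s ∈ Finset.Ico 1 t, vecMulVec (A s) (A s)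

/-!
Write `w_t = ‖A_t‖_{V_t⁻¹}`. Optimism and Cauchy-Schwarz for the dual norms `‖·‖_{V_t}` and
`‖·‖_{V_t⁻¹}` bound the regret of round `t` by `2 α_t w_t / τ`. The term `2 f_t` of `α_t`
contributes at most `2 f_T ∑ w_t`, which a second Cauchy-Schwarz compares with `∑ w_t ^ 2`. In the
window term, the inverses `V_t⁻¹` decrease with `t`, so
`‖A_s‖_{V_t⁻¹} w_t ≤ w_s w_t ≤ (w_s ^ 2 + w_t ^ 2) / 2`, and every index occurs at most `m` times
in either role, which again leaves `∑ w_t ^ 2`. Finally `det V_{t+1} = (1 + w_t ^ 2) det V_t`, so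
`∑ w_t ^ 2` is controlled by `log det V_{T+1}`, and hence, by AM-GM for the eigenvalues, by the
trace of `V_{T+1}`.
-/

section PositiveDefinite

open scoped MatrixOrder

variable {ι : Type*} [Fintype ι] {M N : Matrix ι ι ℝ}

lemma dotProduct_mulVec_self_nonneg (hM : M.PosSemidef) (x : ι → ℝ) :
    0 ≤ x ⬝ᵥ M *ᵥ x := by
  simpa only [star_trivial] using hM.dotProduct_mulVec_nonneg x

lemma dotProduct_mulVec_le_of_le (h : M ≤ N) (x : ι → ℝ) : x ⬝ᵥ M *ᵥ x ≤ x ⬝ᵥ N *ᵥ x := by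
  have hdiff := dotProduct_mulVec_self_nonneg (le_iff.1 h) x
  rwa [sub_mulVec, dotProduct_sub, sub_nonneg] at hdiff

lemma sq_dotProduct_mulVec_le (hM : M.PosSemidef) (x y : ι → ℝ) :
    (x ⬝ᵥ M *ᵥ y) ^ 2 ≤ (x ⬝ᵥ M *ᵥ x) * (y ⬝ᵥ M *ᵥ y) := by
  classical
  have hsymm : LinearMap.IsSymm (toBilin' M) :=
    ⟨(isSymm_toBilin'_iff_isSymm.2 (isHermitian_iff_isSymm.1 hM.isHermitian)).eq⟩
  have hnonneg : ∀ z, 0 ≤ toBilin' M z z := fun z => by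
    simpa only [toBilin'_apply'] using dotProduct_mulVec_self_nonneg hM z
  simpa only [toBilin'_apply'] using (toBilin' M).apply_sq_le_of_symm hnonneg hsymm x y

variable [DecidableEq ι]

lemma mulVec_inv_mulVec (hM : M.PosDef) (x : ι → ℝ) : M *ᵥ (M⁻¹ *ᵥ x) = x := by
  rw [mulVec_mulVec, mul_nonsing_inv _ hM.det_pos.ne'.isUnit, one_mulVec]

lemma sq_dotProduct_le_mul_inv (hM : M.PosDef) (x y : ι → ℝ) :
    (x ⬝ᵥ y) ^ 2 ≤ (x ⬝ᵥ M *ᵥ x) * (y ⬝ᵥ M⁻¹ *ᵥ y) := by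
  have hcs := sq_dotProduct_mulVec_le hM.posSemidef x (M⁻¹ *ᵥ y)
  rwa [mulVec_inv_mulVec hM, dotProduct_comm (M⁻¹ *ᵥ y)] at hcs

lemma two_mul_dotProduct_sub_le_inv (hM : M.PosDef) (x u : ι → ℝ) :
    2 * (u ⬝ᵥ x) - u ⬝ᵥ M *ᵥ u ≤ x ⬝ᵥ M⁻¹ *ᵥ x := by
  have hu := dotProduct_mulVec_self_nonneg hM.posSemidef u
  have hx := dotProduct_mulVec_self_nonneg hM.inv.posSemidef x
  have hsq : (2 * (u ⬝ᵥ x)) ^ 2 ≤ (u ⬝ᵥ M *ᵥ u + x ⬝ᵥ M⁻¹ *ᵥ x) ^ 2 := by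
    linarith [sq_dotProduct_le_mul_inv hM u x, sq_nonneg (u ⬝ᵥ M *ᵥ u - x ⬝ᵥ M⁻¹ *ᵥ x)]
  linarith [le_of_abs_le (abs_le_of_sq_le_sq hsq (add_nonneg hu hx))]

lemma inv_anti_of_posDef (hM : M.PosDef) (h : M ≤ N) : N⁻¹ ≤ M⁻¹ := by
  have hN : N.PosDef := by simpa only [add_sub_cancel] using hM.add_posSemidef (le_iff.1 h)
  refine le_iff.2 (.of_dotProduct_mulVec_nonneg (hM.inv.isHermitian.sub hN.inv.isHermitian) ?_)
  intro x
  rw [star_trivial, sub_mulVec, dotProduct_sub, sub_nonneg]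
  calc x ⬝ᵥ N⁻¹ *ᵥ x
      = 2 * (N⁻¹ *ᵥ x ⬝ᵥ x) - N⁻¹ *ᵥ x ⬝ᵥ N *ᵥ (N⁻¹ *ᵥ x) := by
        rw [mulVec_inv_mulVec hN, dotProduct_comm x]; ring
    _ ≤ 2 * (N⁻¹ *ᵥ x ⬝ᵥ x) - N⁻¹ *ᵥ x ⬝ᵥ M *ᵥ (N⁻¹ *ᵥ x) :=
        sub_le_sub_left (dotProduct_mulVec_le_of_le h _) _
    _ ≤ x ⬝ᵥ M⁻¹ *ᵥ x := two_mul_dotProduct_sub_le_inv hM x _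

lemma det_le_trace_div_card_pow [Nonempty ι] (hM : M.PosSemidef) :
    M.det ≤ (M.trace / Fintype.card ι) ^ Fintype.card ι := by
  have hdet : M.det = ∏ i, hM.isHermitian.eigenvalues i := by
    simpa using hM.isHermitian.det_eq_prod_eigenvalues
  have htrace : M.trace = ∑ i, hM.isHermitian.eigenvalues i := by
    simpa using hM.isHermitian.trace_eq_sum_eigenvalues
  have hprod : 0 ≤ ∏ i, hM.isHermitian.eigenvalues i :=
    prod_nonneg fun i _ => hM.eigenvalues_nonneg i
  have hcard : (0 : ℝ) < Fintype.card ι := by exact_mod_cast Fintype.card_pos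
  have amgm := Real.geom_mean_le_arith_mean univ (fun _ => 1) hM.isHermitian.eigenvalues
    (fun _ _ => zero_le_one) (by simpa using hcard) (fun i _ => hM.eigenvalues_nonneg i)
  simp only [Real.rpow_one, one_mul, sum_const, card_univ, nsmul_eq_mul, mul_one] at amgm
  rw [hdet, htrace, ← Real.rpow_natCast]
  exact (Real.rpow_inv_le_iff_of_pos hprod
    (div_nonneg (sum_nonneg fun i _ => hM.eigenvalues_nonneg i) hcard.le) hcard).1 amgm

lemma det_add_vecMulVec {R : Type*} [CommRing R] {M : Matrix ι ι R} (hM : IsUnit M.det)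
    (u v : ι → R) : (M + vecMulVec u v).det = M.det * (1 + v ⬝ᵥ M⁻¹ *ᵥ u) := by
  rw [vecMulVec_eq Unit, det_add_replicateCol_mul_replicateRow hM,
    det_unique (n := Unit), Matrix.mul_assoc, ← replicateCol_mulVec, replicateRow_mul_replicateCol]
  simp

end PositiveDefinite

section EllipsoidalNorm

open scoped MatrixOrder

variable {d : ℕ} {M N : Matrix (Fin d) (Fin d) ℝ}

lemma mnorm_nonneg (M : Matrix (Fin d) (Fin d) ℝ) (x : Fin d → ℝ) : 0 ≤ mnorm M x :=
  Real.sqrt_nonneg _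

lemma mnorm_sq (hM : M.PosSemidef) (x : Fin d → ℝ) : mnorm M x ^ 2 = x ⬝ᵥ M *ᵥ x :=
  Real.sq_sqrt (dotProduct_mulVec_self_nonneg hM x)

lemma mnorm_le_of_le (h : M ≤ N) (x : Fin d → ℝ) : mnorm M x ≤ mnorm N x :=
  Real.sqrt_le_sqrt (dotProduct_mulVec_le_of_le h x)

lemma abs_dotProduct_le_mnorm_mul_mnorm_inv (hM : M.PosDef) (x y : Fin d → ℝ) :
    |x ⬝ᵥ y| ≤ mnorm M x * mnorm M⁻¹ y := by
  rw [mnorm, mnorm, ← Real.sqrt_mul (dotProduct_mulVec_self_nonneg hM.posSemidef x)]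
  exact Real.abs_le_sqrt (sq_dotProduct_le_mul_inv hM x y)

lemma optimistic_regret_le (hM : M.PosDef) {τ r : ℝ} (hτ : 0 < τ) {θ θhat a b : Fin d → ℝ}
    (hconc : mnorm M (θhat - τ • θ) ≤ r)
    (hopt : a ⬝ᵥ θhat + r * mnorm M⁻¹ a ≤ b ⬝ᵥ θhat + r * mnorm M⁻¹ b) :
    θ ⬝ᵥ a - θ ⬝ᵥ b ≤ 2 / τ * (r * mnorm M⁻¹ b) := by
  have hdev : ∀ x, |x ⬝ᵥ θhat - τ * (θ ⬝ᵥ x)| ≤ r * mnorm M⁻¹ x := fun x =>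
    calc |x ⬝ᵥ θhat - τ * (θ ⬝ᵥ x)|
        = |(θhat - τ • θ) ⬝ᵥ x| := by
          rw [sub_dotProduct, smul_dotProduct, smul_eq_mul, dotProduct_comm θhat]
      _ ≤ mnorm M (θhat - τ • θ) * mnorm M⁻¹ x := abs_dotProduct_le_mnorm_mul_mnorm_inv hM _ x
      _ ≤ r * mnorm M⁻¹ x := mul_le_mul_of_nonneg_right hconc (mnorm_nonneg _ x)
  have hscaled : τ * (θ ⬝ᵥ a - θ ⬝ᵥ b) ≤ 2 * (r * mnorm M⁻¹ b) := by
    linarith [neg_le_of_abs_le (hdev a), le_of_abs_le (hdev b)]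
  rwa [div_mul_eq_mul_div, le_div_iff₀ hτ, mul_comm _ τ]

end EllipsoidalNorm

section EllipticalPotential

open scoped MatrixOrder

/-- The width `‖A_t‖_{V_t(λ)⁻¹}` of the confidence ellipsoid of round `t` in the direction of the
action `A_t` played in that round. -/
noncomputable def actionWidth {d : ℕ} (A : ℕ → Fin d → ℝ) (lam : ℝ) (t : ℕ) : ℝ :=
  mnorm (Vmat A lam t)⁻¹ (A t)

variable {d : ℕ} (A : ℕ → Fin d → ℝ) {lam : ℝ}

lemma actionWidth_nonneg (lam : ℝ) (t : ℕ) : 0 ≤ actionWidth A lam t :=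
  mnorm_nonneg _ _

lemma posSemidef_sum_vecMulVec_self {ι κ : Type*} [Finite ι] (v : κ → ι → ℝ) (s : Finset κ) :
    (∑ k ∈ s, vecMulVec (v k) (v k)).PosSemidef :=
  posSemidef_sum _ fun k _ => by
    simpa only [star_trivial] using posSemidef_vecMulVec_self_star (v k)

lemma posDef_Vmat (hlam : 0 < lam) (t : ℕ) : (Vmat A lam t).PosDef :=
  (PosDef.one.smul hlam).add_posSemidef (posSemidef_sum_vecMulVec_self A _)

lemma Vmat_of_le_one (lam : ℝ) {t : ℕ} (ht : t ≤ 1) : Vmat A lam t = lam • 1 := by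
  rw [Vmat, Ico_eq_empty_of_le ht, sum_empty, add_zero]

lemma Vmat_succ (lam : ℝ) {t : ℕ} (ht : 1 ≤ t) :
    Vmat A lam (t + 1) = Vmat A lam t + vecMulVec (A t) (A t) := by
  rw [Vmat, sum_Ico_succ_top ht, ← add_assoc, Vmat]

lemma trace_Vmat (lam : ℝ) (t : ℕ) :
    (Vmat A lam t).trace = d * lam + ∑ s ∈ Ico 1 t, A s ⬝ᵥ A s := by
  simp only [Vmat, trace_add, trace_smul, trace_one, trace_sum, trace_vecMulVec, Fintype.card_fin,
    smul_eq_mul, mul_comm]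

lemma Vmat_mono (lam : ℝ) : Monotone (Vmat A lam) := fun s t hst => by
  have hsplit : Vmat A lam t - Vmat A lam s
      = ∑ k ∈ Ico 1 t \ Ico 1 s, vecMulVec (A k) (A k) := by
    rw [Vmat, Vmat, add_sub_add_left_eq_sub, sum_sdiff_eq_sub (Ico_subset_Ico_right hst)]
  exact le_iff.2 (hsplit ▸ posSemidef_sum_vecMulVec_self A _)

lemma inv_Vmat_antitone (hlam : 0 < lam) : Antitone fun t => (Vmat A lam t)⁻¹ := fun s _ hst =>
  inv_anti_of_posDef (posDef_Vmat A hlam s) (Vmat_mono A lam hst)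

lemma actionWidth_sq_le (hlam : 0 < lam) (t : ℕ) :
    actionWidth A lam t ^ 2 ≤ A t ⬝ᵥ A t / lam := by
  rw [actionWidth, mnorm_sq (posDef_Vmat A hlam t).inv.posSemidef]
  calc A t ⬝ᵥ (Vmat A lam t)⁻¹ *ᵥ A t
      ≤ A t ⬝ᵥ (Vmat A lam 0)⁻¹ *ᵥ A t :=
        dotProduct_mulVec_le_of_le (inv_Vmat_antitone A hlam t.zero_le) _
    _ = A t ⬝ᵥ A t / lam := by
        have hinv : (lam • (1 : Matrix (Fin d) (Fin d) ℝ))⁻¹ = lam⁻¹ • 1 := by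
          refine inv_eq_right_inv ?_
          rw [smul_mul_smul_comm, mul_inv_cancel₀ hlam.ne', one_mul, one_smul]
        rw [Vmat_of_le_one A lam zero_le_one, hinv, smul_mulVec, one_mulVec, dotProduct_smul,
          smul_eq_mul, inv_mul_eq_div]

lemma log_det_Vmat_succ (hlam : 0 < lam) (T : ℕ) :
    Real.log (Vmat A lam (T + 1)).det =
      d * Real.log lam + ∑ t ∈ Icc 1 T, Real.log (1 + actionWidth A lam t ^ 2) := by
  induction T with
  | zero => simp [Vmat_of_le_one]
  | succ T ih =>
    have hdet := (posDef_Vmat A hlam (T + 1)).det_pos.ne'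
    have hwidth : 1 + actionWidth A lam (T + 1) ^ 2 ≠ 0 := by positivity
    rw [Vmat_succ A lam T.succ_pos, det_add_vecMulVec hdet.isUnit,
      ← mnorm_sq (posDef_Vmat A hlam _).inv.posSemidef, ← actionWidth,
      Real.log_mul hdet hwidth, ih, sum_Icc_succ_top T.succ_pos, add_assoc]

lemma sum_log_one_add_actionWidth_sq_le (hd : 1 ≤ d) (hlam : 0 < lam) {T : ℕ} {b : ℝ}
    (hA : ∀ t ∈ Icc 1 T, A t ⬝ᵥ A t ≤ b) :
    ∑ t ∈ Icc 1 T, Real.log (1 + actionWidth A lam t ^ 2) ≤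
      d * Real.log ((d * lam + T * b) / (d * lam)) := by
  have : Nonempty (Fin d) := ⟨⟨0, hd⟩⟩
  have hd' : (0 : ℝ) < d := by exact_mod_cast hd
  have hV := posDef_Vmat A hlam (T + 1)
  have htrace : (Vmat A lam (T + 1)).trace ≤ d * lam + T * b := by
    rw [trace_Vmat, Ico_add_one_right_eq_Icc]
    simpa using sum_le_sum hA
  have hlogdet : Real.log (Vmat A lam (T + 1)).det ≤ d * Real.log ((d * lam + T * b) / d) :=
    calc Real.log (Vmat A lam (T + 1)).det
        ≤ Real.log (((Vmat A lam (T + 1)).trace / d) ^ d) := Real.log_le_log hV.det_pos <| by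
          simpa using det_le_trace_div_card_pow hV.posSemidef
      _ = d * Real.log ((Vmat A lam (T + 1)).trace / d) := Real.log_pow _ _
      _ ≤ d * Real.log ((d * lam + T * b) / d) := by
          have := hV.trace_pos
          gcongr
  have hpos : 0 < (d * lam + T * b) / d := div_pos (hV.trace_pos.trans_le htrace) hd'
  rw [log_det_Vmat_succ A hlam] at hlogdet
  rw [← div_div, Real.log_div hpos.ne' hlam.ne']
  linarith

lemma le_mul_log_one_add {q κ : ℝ} (hq : 0 ≤ q) (hκ : 1 + q ≤ κ) :
    q ≤ κ * Real.log (1 + q) := by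
  have hlog : q / (1 + q) ≤ Real.log (1 + q) := by
    convert! Real.one_sub_inv_le_log_of_pos (show 0 < 1 + q by positivity) using 1
    field_simp
    ring
  calc q = (1 + q) * (q / (1 + q)) := by field_simp
    _ ≤ κ * Real.log (1 + q) := by gcongr; linarith

lemma sum_actionWidth_sq_le (hd : 1 ≤ d) (hlam : 0 < lam) {T : ℕ} {b κ : ℝ} (hb : 0 ≤ b)
    (hκ : 1 + b / lam ≤ κ) (hA : ∀ t ∈ Icc 1 T, A t ⬝ᵥ A t ≤ b) :
    ∑ t ∈ Icc 1 T, actionWidth A lam t ^ 2 ≤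
      κ * (d * Real.log ((d * lam + T * b) / (d * lam))) := by
  have hκ_nonneg : 0 ≤ κ := (show 0 ≤ 1 + b / lam by positivity).trans hκ
  have hwidth : ∀ t ∈ Icc 1 T, 1 + actionWidth A lam t ^ 2 ≤ κ := fun t ht =>
    calc 1 + actionWidth A lam t ^ 2
        ≤ 1 + A t ⬝ᵥ A t / lam := by gcongr; exact actionWidth_sq_le A hlam t
      _ ≤ 1 + b / lam := by gcongr; exact hA t ht
      _ ≤ κ := hκ
  calc ∑ t ∈ Icc 1 T, actionWidth A lam t ^ 2
      ≤ ∑ t ∈ Icc 1 T, κ * Real.log (1 + actionWidth A lam t ^ 2) :=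
        sum_le_sum fun t ht => le_mul_log_one_add (sq_nonneg _) (hwidth t ht)
    _ = κ * ∑ t ∈ Icc 1 T, Real.log (1 + actionWidth A lam t ^ 2) := by rw [mul_sum]
    _ ≤ κ * (d * Real.log ((d * lam + T * b) / (d * lam))) := by
        gcongr
        exact sum_log_one_add_actionWidth_sq_le A hd hlam hA

end EllipticalPotential

section Window

variable {M : Type*} [AddCommMonoid M] [PartialOrder M] [IsOrderedAddMonoid M]

lemma sum_window_const_le (m T : ℕ) {w : ℕ → M} (hw : ∀ t, 0 ≤ w t) :
    ∑ t ∈ Icc 1 T, ∑ _s ∈ Ico (max 1 (t - m)) t, w t ≤ m • ∑ t ∈ Icc 1 T, w t := by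
  rw [← sum_nsmul]
  refine sum_le_sum fun t _ => ?_
  rw [sum_const, Nat.card_Ico]
  exact nsmul_le_nsmul_left (hw t) (by omega)

lemma sum_window_le (m T : ℕ) {w : ℕ → M} (hw : ∀ t, 0 ≤ w t) :
    ∑ t ∈ Icc 1 T, ∑ s ∈ Ico (max 1 (t - m)) t, w s ≤ m • ∑ t ∈ Icc 1 T, w t := by
  have hswap : ∀ t s, t ∈ Icc 1 T ∧ s ∈ Ico (max 1 (t - m)) t ↔
      t ∈ Ioc s (min T (s + m)) ∧ s ∈ Icc 1 T := by
    intro t s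
    simp only [mem_Icc, mem_Ico, mem_Ioc]
    omega
  rw [sum_comm' hswap, ← sum_nsmul]
  refine sum_le_sum fun s _ => ?_
  rw [sum_const, Nat.card_Ioc]
  exact nsmul_le_nsmul_left (hw s) (by omega)

lemma sum_window_mul_le (m T : ℕ) (w : ℕ → ℝ) :
    ∑ t ∈ Icc 1 T, ∑ s ∈ Ico (max 1 (t - m)) t, w s * w t ≤ m * ∑ t ∈ Icc 1 T, w t ^ 2 := by
  have amgm : ∀ s t, w s * w t ≤ 2⁻¹ * (w s ^ 2 + w t ^ 2) := fun s t => by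
    linarith [two_mul_le_add_sq (w s) (w t)]
  have hpast := sum_window_le m T fun t => sq_nonneg (w t)
  have hpresent := sum_window_const_le m T fun t => sq_nonneg (w t)
  rw [nsmul_eq_mul] at hpast hpresent
  calc ∑ t ∈ Icc 1 T, ∑ s ∈ Ico (max 1 (t - m)) t, w s * w t
      ≤ ∑ t ∈ Icc 1 T, ∑ s ∈ Ico (max 1 (t - m)) t, 2⁻¹ * (w s ^ 2 + w t ^ 2) :=
        sum_le_sum fun t _ => sum_le_sum fun s _ => amgm s t
    _ = 2⁻¹ * (∑ t ∈ Icc 1 T, ∑ s ∈ Ico (max 1 (t - m)) t, w s ^ 2 +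
          ∑ t ∈ Icc 1 T, ∑ s ∈ Ico (max 1 (t - m)) t, w t ^ 2) := by
        simp only [← mul_sum, sum_add_distrib]
    _ ≤ m * ∑ t ∈ Icc 1 T, w t ^ 2 := by linarith

end Window

section Regret

variable {d : ℕ} {A : ℕ → Fin d → ℝ} {lam : ℝ} {m T : ℕ} {F : ℝ} {f α : ℕ → ℝ}

lemma mnorm_inv_Vmat_le_actionWidth (hlam : 0 < lam) {s t : ℕ} (hst : s ≤ t) :
    mnorm (Vmat A lam t)⁻¹ (A s) ≤ actionWidth A lam s :=
  mnorm_le_of_le (inv_Vmat_antitone A hlam hst) (A s)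

lemma sum_radius_mul_actionWidth_le (hlam : 0 < lam) (hf : ∀ t ∈ Icc 1 T, f t ≤ F)
    (hα : ∀ t ∈ Icc 1 T,
      α t = 2 * f t + ∑ s ∈ Ico (max 1 (t - m)) t, mnorm (Vmat A lam t)⁻¹ (A s)) :
    ∑ t ∈ Icc 1 T, α t * actionWidth A lam t ≤
      2 * F * ∑ t ∈ Icc 1 T, actionWidth A lam t +
        m * ∑ t ∈ Icc 1 T, actionWidth A lam t ^ 2 := by
  have hround : ∀ t ∈ Icc 1 T, α t * actionWidth A lam t ≤ 2 * F * actionWidth A lam t +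
      ∑ s ∈ Ico (max 1 (t - m)) t, actionWidth A lam s * actionWidth A lam t := by
    intro t ht
    rw [← sum_mul, ← add_mul, hα t ht]
    refine mul_le_mul_of_nonneg_right ?_ (actionWidth_nonneg A lam t)
    gcongr with s hs
    · exact hf t ht
    · exact mnorm_inv_Vmat_le_actionWidth hlam (mem_Ico.1 hs).2.le
  calc ∑ t ∈ Icc 1 T, α t * actionWidth A lam t
      ≤ 2 * F * ∑ t ∈ Icc 1 T, actionWidth A lam t +
          ∑ t ∈ Icc 1 T, ∑ s ∈ Ico (max 1 (t - m)) t,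
            actionWidth A lam s * actionWidth A lam t := by
        rw [mul_sum, ← sum_add_distrib]
        exact sum_le_sum hround
    _ ≤ _ := by gcongr; exact sum_window_mul_le m T _

lemma sum_le_sqrt_card_mul_of_sum_sq_le {ι : Type*} {s : Finset ι} {w : ι → ℝ} {P : ℝ}
    (hP : ∑ i ∈ s, w i ^ 2 ≤ P) : ∑ i ∈ s, w i ≤ √(#s * P) :=
  Real.le_sqrt_of_sq_le (sq_sum_le_card_mul_sum_sq.trans (by gcongr))

end Regret

/-- Comparing with an arbitrary sequence `a` avoids maxima over the action sets, which need not
exist when these are infinite. The constant `κ` comes from `q ≤ (1 + q) log (1 + q)` for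
`q = w_t ^ 2 ≤ L ^ 2 / λ`. -/
theorem deterministic_regret_bound_on_good_event_general
    {d : ℕ} (hd : 1 ≤ d) {lam L κ : ℝ} (hlam : 0 < lam) (hκ : 1 + L ^ 2 / lam ≤ κ)
    {m T : ℕ} {τ : ℝ} (hτ : 0 < τ) {θ : Fin d → ℝ} {a A θhat : ℕ → Fin d → ℝ}
    (hAnorm : ∀ t ∈ Icc 1 T, √(A t ⬝ᵥ A t) ≤ L)
    {F : ℝ} (hF : 0 ≤ F) {f α : ℕ → ℝ} (hf : ∀ t ∈ Icc 1 T, f t ≤ F)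
    (hα : ∀ t ∈ Icc 1 T,
      α t = 2 * f t + ∑ s ∈ Ico (max 1 (t - m)) t, mnorm (Vmat A lam t)⁻¹ (A s))
    (hconc : ∀ t ∈ Icc 1 T, mnorm (Vmat A lam t) (θhat t - τ • θ) ≤ α t)
    (hopt : ∀ t ∈ Icc 1 T,
      a t ⬝ᵥ θhat t + α t * mnorm (Vmat A lam t)⁻¹ (a t) ≤
        A t ⬝ᵥ θhat t + α t * mnorm (Vmat A lam t)⁻¹ (A t)) :
    ∑ t ∈ Icc 1 T, (θ ⬝ᵥ a t - θ ⬝ᵥ A t) ≤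
      (4 * F / τ) * √(κ * d * T * Real.log ((d * lam + T * L ^ 2) / (d * lam))) +
        (2 * κ * m * d / τ) * Real.log ((d * lam + T * L ^ 2) / (d * lam)) := by
  set P := κ * (d * Real.log ((d * lam + T * L ^ 2) / (d * lam))) with hP
  have hpotential : ∑ t ∈ Icc 1 T, actionWidth A lam t ^ 2 ≤ P :=
    sum_actionWidth_sq_le A hd hlam (sq_nonneg L) hκ fun t ht =>
      (Real.sqrt_le_iff.1 (hAnorm t ht)).2
  have hwidths : ∑ t ∈ Icc 1 T, actionWidth A lam t ≤ √(T * P) := by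
    simpa only [Nat.card_Icc, Nat.add_sub_cancel] using
      sum_le_sqrt_card_mul_of_sum_sq_le hpotential
  calc ∑ t ∈ Icc 1 T, (θ ⬝ᵥ a t - θ ⬝ᵥ A t)
      ≤ ∑ t ∈ Icc 1 T, 2 / τ * (α t * actionWidth A lam t) := sum_le_sum fun t ht =>
        optimistic_regret_le (posDef_Vmat A hlam t) hτ (hconc t ht) (hopt t ht)
    _ = 2 / τ * ∑ t ∈ Icc 1 T, α t * actionWidth A lam t := by rw [mul_sum]
    _ ≤ 2 / τ * (2 * F * ∑ t ∈ Icc 1 T, actionWidth A lam t +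
          m * ∑ t ∈ Icc 1 T, actionWidth A lam t ^ 2) := by
        gcongr
        exact sum_radius_mul_actionWidth_le hlam hf hα
    _ ≤ 2 / τ * (2 * F * √(T * P) + m * P) := by gcongr
    _ = _ := by
        rw [hP]
        ring_nf

theorem deterministic_regret_bound_on_good_event
    {d : ℕ} (hd : 1 ≤ d) (lam : ℝ) (hlam : 1 ≤ lam)
    (m T : ℕ) (hm : 1 ≤ m) (hT : 1 ≤ T)
    (τ : ℝ) (hτ : τ ∈ Set.Ioc (0 : ℝ) 1)
    (θ : Fin d → ℝ)
    (𝒜 : ℕ → Finset (Fin d → ℝ)) (h𝒜ne : ∀ t, (𝒜 t).Nonempty)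
    (h𝒜norm : ∀ t ∈ Finset.Icc 1 T, ∀ a ∈ 𝒜 t, Real.sqrt (a ⬝ᵥ a) ≤ 1)
    (A : ℕ → Fin d → ℝ) (hAmem : ∀ t ∈ Finset.Icc 1 T, A t ∈ 𝒜 t)
    (θhat : ℕ → Fin d → ℝ)
    (f : ℕ → ℝ) (hfpos : ∀ t ∈ Finset.Icc 1 T, 0 < f t)
    (hfmono : ∀ s t : ℕ, 1 ≤ s → s ≤ t → t ≤ T → f s ≤ f t)
    (α : ℕ → ℝ)
    (hα : ∀ t, α t = 2 * f t +
      ∑ s ∈ Finset.Ico (max 1 (t - m)) t, mnorm (Vmat A lam t)⁻¹ (A s))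
    (hconc : ∀ t ∈ Finset.Icc 1 T, mnorm (Vmat A lam t) (θhat t - τ • θ) ≤ α t)
    (hopt : ∀ t ∈ Finset.Icc 1 T, ∀ a ∈ 𝒜 t,
      a ⬝ᵥ θhat t + α t * mnorm (Vmat A lam t)⁻¹ a ≤
        A t ⬝ᵥ θhat t + α t * mnorm (Vmat A lam t)⁻¹ (A t)) :
    ∑ t ∈ Finset.Icc 1 T, ((𝒜 t).sup' (h𝒜ne t) (fun a => θ ⬝ᵥ a) - θ ⬝ᵥ A t) ≤
      (4 * f T / τ) * Real.sqrt (2 * d * T * Real.log ((d * lam + T) / (d * lam))) +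
        (4 * m * d / τ) * Real.log ((d * lam + T) / (d * lam)) := by
  choose a ha hsup using fun t => exists_mem_eq_sup' (h𝒜ne t) (θ ⬝ᵥ ·)
  have hκ : 1 + 1 ^ 2 / lam ≤ 2 := by
    rw [one_pow]; linarith [div_le_one_of_le₀ hlam (zero_le_one.trans hlam)]
  have hf : ∀ t ∈ Icc 1 T, f t ≤ f T := fun t ht =>
    hfmono t T (mem_Icc.1 ht).1 (mem_Icc.1 ht).2 le_rfl
  simp only [hsup]
  convert! deterministic_regret_bound_on_good_event_general hd (zero_lt_one.trans_le hlam) hκ hτ.1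
    (fun t ht => h𝒜norm t ht _ (hAmem t ht)) (hfpos T (right_mem_Icc.2 hT)).le hf
    (fun t _ => hα t) hconc (fun t ht => hopt t ht _ (ha t)) using 1
  ring_nf
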